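/- arXiv:2512.21521 — 8 statements merged into one kernel-verified Lean document; each statement's English description precedes it below -/
import Mathlib

section
/- Let f : R^d → R be L-smooth (its gradient is L-Lipschitz) and bounded below by f^inf > −∞, let γ > 0, let G^k ∈ R^d be nonzero, and let x^{k+1} = x^k − γ G^k/‖G^k‖. Then f(x^{k+1}) − f^inf ≤ f(x^k) − f^inf − γ‖∇f(x^k)‖ + 2γ‖∇f(x^k) − G^k‖ + Lγ²/2. -/
/-!
The classical descent lemma gives, for the step `v = xk1 - xk = -(γ / ‖G‖) • G` of length `γ`,
`f xk1 ≤ f xk + ⟪g xk, v⟫ + L / 2 * γ ^ 2`. Splitting `g xk = (g xk - G) + G`, Cauchy–Schwarz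
bounds the first contribution to the inner product by `γ * ‖g xk - G‖`, while the second equals
`-γ * ‖G‖ ≤ -γ * ‖g xk‖ + γ * ‖g xk - G‖` by the triangle inequality.
-/

/-- Descent lemma: a function with `L`-Lipschitz gradient lies below its quadratic upper model.
Along the segment `t ↦ x + t • v` the derivative of `f` is at most that of the model. -/
theorem descent_lemma {E : Type*} [NormedAddCommGroup E] [InnerProductSpace ℝ E] [CompleteSpace E]
    (f : E → ℝ) (g : E → E) (L : ℝ)
    (hgrad : ∀ x, HasGradientAt f (g x) x)
    (hlip : ∀ x y, ‖g x - g y‖ ≤ L * ‖x - y‖) (x v : E) :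
    f (x + v) ≤ f x + inner ℝ (g x) v + L / 2 * ‖v‖ ^ 2 := by
  have hφ : ∀ t : ℝ, HasDerivAt (fun t : ℝ => f (x + t • v)) (inner ℝ (g (x + t • v)) v) t := by
    intro t
    have hline : HasDerivAt (fun t : ℝ => x + t • v) v t := by
      simpa using ((hasDerivAt_id t).smul_const v).const_add x
    have h := (hgrad (x + t • v)).hasFDerivAt.comp_hasDerivAt t hline
    exact h.congr_deriv (by simp)
  have hB : ∀ t : ℝ, HasDerivAt
      (fun t : ℝ => f x + t * inner ℝ (g x) v + L / 2 * ‖v‖ ^ 2 * t ^ 2)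
      (inner ℝ (g x) v + L * ‖v‖ ^ 2 * t) t := by
    intro t
    have h := (((hasDerivAt_id' t).mul_const (inner ℝ (g x) v)).const_add (f x)).add
      ((hasDerivAt_pow 2 t).const_mul (L / 2 * ‖v‖ ^ 2))
    refine h.congr_deriv ?_
    norm_num
    ring
  have key := image_le_of_deriv_right_le_deriv_boundary (a := (0 : ℝ)) (b := 1)
    (fun t _ => (hφ t).continuousAt.continuousWithinAt)
    (fun t _ => (hφ t).hasDerivWithinAt) (by simp)
    (fun t _ => (hB t).continuousAt.continuousWithinAt)
    (fun t _ => (hB t).hasDerivWithinAt)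
    (fun t ht => by
      have h1 := real_inner_le_norm (g (x + t • v) - g x) v
      have h2 := hlip (x + t • v) x
      rw [add_sub_cancel_left, norm_smul, Real.norm_of_nonneg ht.1] at h2
      rw [inner_sub_left] at h1
      nlinarith [mul_le_mul_of_nonneg_right h2 (norm_nonneg v)])
    (Set.right_mem_Icc.2 zero_le_one)
  simpa using key

/-- descent inequality for the normalized step. -/
theorem stmt5 {d : ℕ} (f : EuclideanSpace ℝ (Fin d) → ℝ)
    (g : EuclideanSpace ℝ (Fin d) → EuclideanSpace ℝ (Fin d))
    (L finf γ : ℝ) (hL : 0 < L) (hγ : 0 < γ)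
    (hgrad : ∀ x, HasGradientAt f (g x) x)
    (hlip : ∀ x y, ‖g x - g y‖ ≤ L * ‖x - y‖)
    (hbdd : ∀ x, finf ≤ f x)
    (xk xk1 G : EuclideanSpace ℝ (Fin d)) (hG : G ≠ 0)
    (hx : xk1 = xk - (γ / ‖G‖) • G) :
    f xk1 - finf ≤ f xk - finf - γ * ‖g xk‖ + 2 * γ * ‖g xk - G‖ + L * γ ^ 2 / 2 := by
  have hGn : 0 < ‖G‖ := norm_pos_iff.2 hG
  have hd := descent_lemma f g L hgrad hlip xk (-((γ / ‖G‖) • G))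
  have hv : ‖-((γ / ‖G‖) • G)‖ = γ := by
    rw [norm_neg, norm_smul, Real.norm_of_nonneg (by positivity)]
    field_simp
  have hGv : inner ℝ G (-((γ / ‖G‖) • G)) = -(γ * ‖G‖) := by
    rw [inner_neg_right, real_inner_smul_right, real_inner_self_eq_norm_sq]
    field_simp
  have hcs := real_inner_le_norm (g xk - G) (-((γ / ‖G‖) • G))
  rw [inner_sub_left, hGv, hv] at hcs
  rw [← sub_eq_add_neg, ← hx, hv] at hd
  have htri : ‖g xk‖ - ‖G‖ ≤ ‖g xk - G‖ := norm_sub_norm_le _ _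
  nlinarith [mul_le_mul_of_nonneg_left htri hγ.le]
end

section
/- Let {V^k}_{k=0}^{K+1} and {W^k}_{k=0}^{K} be non-negative real sequences, and let b₁ ≥ 0, b₂ > 0, b₃ ≥ 0, γ > 0 be such that V^{k+1} ≤ (1 + b₁γ²)V^k − b₂γ W^k + b₃γ for all k ∈ {0,…,K}. Then min_{k ∈ {0,…,K}} W^k ≤ exp(b₁γ²(K+1))/(K+1) · V^0/(b₂γ) + b₃/b₂. -/
/-!
Let `m` be the best value of `W` and `δ = b₂ γ m - b₃ γ`. If `δ ≤ 0`, then `m ≤ b₃ / b₂` already.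
Otherwise the recursion gives `V (k + 1) + δ ≤ (1 + b₁ γ²) V k`, and since the growth factor is at
least `1` the increments accumulate: `V k + k δ ≤ (1 + b₁ γ²) ^ k V 0`. At `k = K + 1` this bounds
`(K + 1) δ`, and `1 + x ≤ exp x` turns the power into an exponential.
-/

open Finset

/-- from the recursive descent inequality to a bound on the best iterate. -/
theorem stmt6 (K : ℕ) (V W : ℕ → ℝ) (b₁ b₂ b₃ γ : ℝ)
    (hb₁ : 0 ≤ b₁) (hb₂ : 0 < b₂) (hb₃ : 0 ≤ b₃) (hγ : 0 < γ)
    (hV : ∀ k, 0 ≤ V k) (hW : ∀ k, 0 ≤ W k)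
    (hrec : ∀ k ∈ Finset.range (K + 1),
      V (k + 1) ≤ (1 + b₁ * γ ^ 2) * V k - b₂ * γ * W k + b₃ * γ) :
    (Finset.range (K + 1)).inf' (by simp) W ≤
      Real.exp (b₁ * γ ^ 2 * (K + 1)) / (K + 1) * (V 0 / (b₂ * γ)) + b₃ / b₂ := by
  have hm : ∀ k ∈ Finset.range (K + 1), (Finset.range (K + 1)).inf' (by simp) W ≤ W k :=
    fun k hk => Finset.inf'_le W hk
  generalize (Finset.range (K + 1)).inf' (by simp) W = m at hm ⊢
  have ha : 0 ≤ b₁ * γ ^ 2 := by positivity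
  generalize b₁ * γ ^ 2 = a at ha hrec ⊢
  have hK : (0 : ℝ) < K + 1 := by positivity
  have hβ : 0 < b₂ * γ := by positivity
  have key : (K + 1 : ℝ) * (b₂ * γ * m - b₃ * γ) ≤ Real.exp (a * (K + 1)) * V 0 := by
    rcases le_total (b₂ * γ * m - b₃ * γ) 0 with hδ | hδ
    · exact (mul_nonpos_of_nonneg_of_nonpos hK.le hδ).trans
        (mul_nonneg (Real.exp_pos _).le (hV 0))
    · have acc : ∀ k ≤ K + 1, V k + k * (b₂ * γ * m - b₃ * γ) ≤ (1 + a) ^ k * V 0 := by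
        intro k
        induction k with
        | zero => simp
        | succ k ih =>
          intro hk
          have hmem : k ∈ Finset.range (K + 1) := Finset.mem_range.2 hk
          have h1 := mul_le_mul_of_nonneg_left (ih (by omega)) (by linarith : 0 ≤ 1 + a)
          have h2 := hrec k hmem
          have h3 := mul_le_mul_of_nonneg_left (hm k hmem) hβ.le
          have h4 : 0 ≤ a * (k * (b₂ * γ * m - b₃ * γ)) := by positivity
          rw [pow_succ]
          push_cast
          linarith
      have h1 := acc (K + 1) le_rfl
      have h2 : (1 + a) ^ (K + 1) ≤ Real.exp (a * (K + 1)) := by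
        calc (1 + a) ^ (K + 1) ≤ Real.exp a ^ (K + 1) := by
              gcongr
              linarith [Real.add_one_le_exp a]
          _ = Real.exp (a * (K + 1)) := by
              rw [← Real.exp_nat_mul]
              push_cast
              ring_nf
      have h3 := mul_le_mul_of_nonneg_right h2 (hV 0)
      push_cast at h1
      linarith [hV (K + 1)]
  have hsplit : Real.exp (a * (K + 1)) / (K + 1) * (V 0 / (b₂ * γ)) + b₃ / b₂ - m =
      (Real.exp (a * (K + 1)) * V 0 - (K + 1) * (b₂ * γ * m - b₃ * γ)) /
        ((K + 1) * (b₂ * γ)) := by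
    field_simp
    ring
  have : 0 ≤ (Real.exp (a * (K + 1)) * V 0 - (K + 1) * (b₂ * γ * m - b₃ * γ)) /
      ((K + 1) * (b₂ * γ)) := div_nonneg (by linarith) (by positivity)
  linarith
end

section
/- Let f(x) = (1/M)∑_{i=1}^M f_i(x) on R^d, where f is bounded below by f^inf > −∞ and each f_i is L-smooth (gradient L-Lipschitz) and bounded below by f_i^inf > −∞. Set Δ^inf = f^inf − (1/M)∑_{i=1}^M f_i^inf and assume Δ^inf > 0. Then for every x ∈ R^d, (1/M)∑_{i=1}^M ‖∇f_i(x)‖ ≤ sqrt(2L/Δ^inf)·(f(x) − f^inf) + sqrt(2L·Δ^inf). -/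
/-! A gradient step of length `1 / L` decreases an `L`-smooth function by at least `‖∇g‖² / (2L)`, so a
lower bound `c` of `g` gives `‖∇g x‖² ≤ 2L (g x - c)` (`sq_norm_gradient_le`). With
`s = √(2LΔ)`, Young's inequality `2 s ‖∇fᵢ x‖ ≤ ‖∇fᵢ x‖² + s²` and averaging over `i` yield
`2 s · avg ‖∇fᵢ x‖ ≤ 2L (f x - f^inf + Δ) + s²`, because the average of `fᵢ x - fᵢ^inf` is
`f x - f^inf + Δ`. Dividing by `2 s` gives the claim, even with half the coefficient of
`f x - f^inf`.
-/

open Finset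

/-- The squared gradient norm of an `L`-smooth function is at most `2L` times the gap between its
value and any lower bound. -/
theorem sq_norm_gradient_le {d : ℕ} {h : EuclideanSpace ℝ (Fin d) → ℝ}
    {g : EuclideanSpace ℝ (Fin d) → EuclideanSpace ℝ (Fin d)} {L c : ℝ} (hL : 0 < L)
    (hgrad : ∀ x, HasGradientAt h (g x) x) (hlip : ∀ x y, ‖g x - g y‖ ≤ L * ‖x - y‖)
    (hc : ∀ x, c ≤ h x) (x : EuclideanSpace ℝ (Fin d)) :
    ‖g x‖ ^ 2 ≤ 2 * L * (h x - c) := by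
  have hline : ∀ t : ℝ, HasDerivAt (fun t : ℝ => x - t • g x) (-g x) t := fun t => by
    simpa using ((hasDerivAt_id t).smul_const (g x)).const_sub x
  have hφ : ∀ t : ℝ, HasDerivAt (fun t : ℝ => h (x - t • g x))
      (inner ℝ (g (x - t • g x)) (-g x)) t := fun t => by
    have := (hgrad (x - t • g x)).hasFDerivAt.comp_hasDerivAt t (hline t)
    simpa [Function.comp_def] using this
  have hB : ∀ t : ℝ, HasDerivAt (fun t : ℝ => h x + (L * t ^ 2 / 2 - t) * ‖g x‖ ^ 2)
      ((L * t - 1) * ‖g x‖ ^ 2) t := fun t => by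
    have h1 := ((((hasDerivAt_pow 2 t).const_mul L).div_const 2).sub (hasDerivAt_id t)).mul_const
      (‖g x‖ ^ 2)
    refine (h1.const_add (h x)).congr_deriv ?_
    push_cast
    ring
  have hbound : ∀ t ∈ Set.Ico (0 : ℝ) (1 / L),
      inner ℝ (g (x - t • g x)) (-g x) ≤ (L * t - 1) * ‖g x‖ ^ 2 := fun t ht => by
    have h1 : inner ℝ (g (x - t • g x)) (-g x) =
        inner ℝ (g x - g (x - t • g x)) (g x) - ‖g x‖ ^ 2 := by
      rw [inner_sub_left, inner_neg_right, real_inner_self_eq_norm_sq]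
      ring
    have h2 := real_inner_le_norm (g x - g (x - t • g x)) (g x)
    have h3 : ‖g x - g (x - t • g x)‖ ≤ L * (t * ‖g x‖) := by
      simpa [norm_smul, abs_of_nonneg ht.1] using hlip x (x - t • g x)
    have h4 := mul_le_mul_of_nonneg_right h3 (norm_nonneg (g x))
    rw [h1]
    linarith
  have key := image_le_of_deriv_right_le_deriv_boundary
    (fun t _ => (hφ t).continuousAt.continuousWithinAt) (fun t _ => (hφ t).hasDerivWithinAt)
    (by simp) (fun t _ => (hB t).continuousAt.continuousWithinAt)
    (fun t _ => (hB t).hasDerivWithinAt) hbound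
    (Set.right_mem_Icc.2 (one_div_pos.2 hL).le)
  have hval : (L * (1 / L) ^ 2 / 2 - 1 / L) * ‖g x‖ ^ 2 = -(‖g x‖ ^ 2 / (2 * L)) := by
    field_simp
    ring
  have h5 := (hc _).trans key
  rw [hval] at h5
  have h6 : ‖g x‖ ^ 2 / (2 * L) ≤ h x - c := by linarith
  rw [div_le_iff₀ (by positivity)] at h6
  linarith

/-- bound on the average gradient norm via functional heterogeneity. -/
theorem stmt7 {d M : ℕ} (hM : 0 < M)
    (f : EuclideanSpace ℝ (Fin d) → ℝ)
    (fi : Fin M → EuclideanSpace ℝ (Fin d) → ℝ)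
    (gi : Fin M → EuclideanSpace ℝ (Fin d) → EuclideanSpace ℝ (Fin d))
    (L finf Δinf : ℝ) (fiinf : Fin M → ℝ) (hL : 0 < L)
    (hf : ∀ x, f x = (1 / (M : ℝ)) * ∑ i, fi i x)
    (hgrad : ∀ i x, HasGradientAt (fi i) (gi i x) x)
    (hlip : ∀ i x y, ‖gi i x - gi i y‖ ≤ L * ‖x - y‖)
    (hfbdd : ∀ x, finf ≤ f x)
    (hfibdd : ∀ i x, fiinf i ≤ fi i x)
    (hΔ : Δinf = finf - (1 / (M : ℝ)) * ∑ i, fiinf i)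
    (hΔpos : 0 < Δinf) :
    ∀ x, (1 / (M : ℝ)) * ∑ i, ‖gi i x‖ ≤
      Real.sqrt (2 * L / Δinf) * (f x - finf) + Real.sqrt (2 * L * Δinf) := by
  intro x
  have hMR : (0 : ℝ) < M := by exact_mod_cast hM
  set s := Real.sqrt (2 * L * Δinf) with hs
  have hspos : 0 < s := Real.sqrt_pos.2 (by positivity)
  have hsq : s ^ 2 = 2 * L * Δinf := Real.sq_sqrt (by positivity)
  have hcoef : Real.sqrt (2 * L / Δinf) = s / Δinf := by
    rw [hs, eq_div_iff hΔpos.ne', ← Real.sqrt_sq hΔpos.le, ← Real.sqrt_mul (by positivity),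
      Real.sqrt_sq hΔpos.le]
    congr 1
    field_simp
  have hi : ∀ i, 2 * s * ‖gi i x‖ ≤ 2 * L * (fi i x - fiinf i) + s ^ 2 := fun i => by
    have := sq_norm_gradient_le hL (hgrad i) (hlip i) (hfibdd i) x
    nlinarith [sq_nonneg (‖gi i x‖ - s)]
  have hsum : ∑ i, 2 * s * ‖gi i x‖ ≤ ∑ i, (2 * L * (fi i x - fiinf i) + s ^ 2) :=
    sum_le_sum fun i _ => hi i
  rw [sum_add_distrib, ← mul_sum, ← mul_sum, sum_sub_distrib, sum_const, card_univ,
    Fintype.card_fin, nsmul_eq_mul] at hsum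
  have havg : 2 * s * ((1 / (M : ℝ)) * ∑ i, ‖gi i x‖) ≤
      2 * L * (f x - finf + Δinf) + s ^ 2 := by
    have h := mul_le_mul_of_nonneg_left hsum (one_div_pos.2 hMR).le
    have hone : 1 / (M : ℝ) * (M * s ^ 2) = s ^ 2 := by field_simp
    rw [mul_add, hone] at h
    rw [hf x, hΔ]
    linarith
  have hr : 0 ≤ f x - finf := sub_nonneg.2 (hfbdd x)
  rw [hcoef]
  refine le_of_mul_le_mul_left (havg.trans ?_) (by positivity : 0 < 2 * s)
  have e : 2 * s * (s / Δinf * (f x - finf) + s) = 4 * L * (f x - finf) + 2 * s ^ 2 := by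
    have : 2 * s * (s / Δinf * (f x - finf) + s) =
        2 * (s ^ 2 / Δinf) * (f x - finf) + 2 * s ^ 2 := by ring
    rw [this, hsq]
    field_simp
    ring
  rw [e, hsq]
  nlinarith [mul_nonneg hL.le hr]
end

section
/- Let f_i : R^d → R be L-smooth, let γ ∈ (0, 1/(2L)], let T ≥ 1, let x^k, x^{k+1} ∈ R^d with ‖x^{k+1} − x^k‖ ≤ η for some η > 0, and define for y ∈ {x^k, x^{k+1}} the local gradient descent sequence starting from y: x_i^{·,0} = y and x_i^{·,j+1} = x_i^{·,j} − (γ/T)∇f_i(x_i^{·,j}) for j = 0,…,T−1 (writing x_i^{k,j} and x_i^{k+1,j} for the two sequences). Then (1/T)∑_{j=0}^{T−1} ‖x_i^{k+1,j} − x_i^{k,j}‖ ≤ 2η. -/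
/-!
By the Lipschitz bound on the gradient, one local step expands the distance between the two
trajectories by a factor of at most `1 + γ L / T ≤ 1 + 1 / (2T)`. After `j ≤ T` steps the distance
is therefore at most `(1 + j / T) η ≤ 2 η` (`norm_gdSeq_sub_le`), so the average over `j < T` is
also at most `2 η`.
-/

open Finset

/-- Local gradient-descent sequence starting at `y`:
`y⁽⁰⁾ = y`, `y⁽ʲ⁺¹⁾ = y⁽ʲ⁾ − (γ/T)·g(y⁽ʲ⁾)`. -/
noncomputable def gdSeq {d : ℕ}
    (g : EuclideanSpace ℝ (Fin d) → EuclideanSpace ℝ (Fin d)) (γ : ℝ) (T : ℕ)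
    (y : EuclideanSpace ℝ (Fin d)) : ℕ → EuclideanSpace ℝ (Fin d)
  | 0 => y
  | j + 1 => gdSeq g γ T y j - (γ / (T : ℝ)) • g (gdSeq g γ T y j)

/-- As long as `j ≤ T`, the distance between the two trajectories has grown by a factor of at most
`1 + j / T`: since `(1 + j / T) / 2 ≤ 1`, the step factor `1 + 1 / (2T)` adds at most `1 / T`. -/
theorem norm_gdSeq_sub_le {d : ℕ}
    (g : EuclideanSpace ℝ (Fin d) → EuclideanSpace ℝ (Fin d))
    (L γ η : ℝ) (T : ℕ) (hγ : 0 < γ) (hγL : γ * L ≤ 1 / 2) (hT : 1 ≤ T) (hη : 0 < η)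
    (hlip : ∀ x y, ‖g x - g y‖ ≤ L * ‖x - y‖)
    (x y : EuclideanSpace ℝ (Fin d)) (hx : ‖x - y‖ ≤ η) (j : ℕ) (hj : j ≤ T) :
    ‖gdSeq g γ T x j - gdSeq g γ T y j‖ ≤ (1 + j / T) * η := by
  have hT0 : (0 : ℝ) < T := by exact_mod_cast hT
  induction j with
  | zero => simpa [gdSeq] using hx
  | succ j ih =>
    have ih := ih (by omega)
    simp only [gdSeq]
    set a := gdSeq g γ T x j
    set b := gdSeq g γ T y j
    have hjT : (j : ℝ) / T ≤ 1 := by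
      rw [div_le_one hT0]
      exact_mod_cast (by omega : j ≤ T)
    have hstep : ‖(γ / (T : ℝ)) • (g a - g b)‖ ≤ (1 / 2 * ‖a - b‖) / T := by
      rw [norm_smul, Real.norm_of_nonneg (by positivity), div_mul_eq_mul_div]
      refine div_le_div_of_nonneg_right ?_ hT0.le
      calc γ * ‖g a - g b‖ ≤ γ * (L * ‖a - b‖) := by gcongr; exact hlip a b
        _ = (γ * L) * ‖a - b‖ := by ring
        _ ≤ 1 / 2 * ‖a - b‖ := by gcongr
    have hab : ‖a - b‖ ≤ 2 * η := ih.trans (by gcongr; linarith)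
    calc ‖a - (γ / (T : ℝ)) • g a - (b - (γ / (T : ℝ)) • g b)‖
        = ‖(a - b) - (γ / (T : ℝ)) • (g a - g b)‖ := by
          congr 1
          rw [smul_sub]
          abel
      _ ≤ ‖a - b‖ + ‖(γ / (T : ℝ)) • (g a - g b)‖ := norm_sub_le _ _
      _ ≤ (1 + j / T) * η + η / T := by
          refine add_le_add ih (hstep.trans ?_)
          gcongr
          linarith
      _ = (1 + ((j + 1 : ℕ) : ℝ) / T) * η := by
          push_cast
          ring

/-- stability of the local GD trajectories. -/
theorem stmt8 {d : ℕ} (fi : EuclideanSpace ℝ (Fin d) → ℝ)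
    (g : EuclideanSpace ℝ (Fin d) → EuclideanSpace ℝ (Fin d))
    (L γ η : ℝ) (T : ℕ) (hL : 0 < L) (hγ : 0 < γ) (hγle : γ ≤ 1 / (2 * L))
    (hT : 1 ≤ T) (hη : 0 < η)
    (hgrad : ∀ x, HasGradientAt fi (g x) x)
    (hlip : ∀ x y, ‖g x - g y‖ ≤ L * ‖x - y‖)
    (xk xk1 : EuclideanSpace ℝ (Fin d)) (hx : ‖xk1 - xk‖ ≤ η) :
    (1 / (T : ℝ)) * ∑ j ∈ Finset.range T, ‖gdSeq g γ T xk1 j - gdSeq g γ T xk j‖ ≤ 2 * η := by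
  have hT0 : (0 : ℝ) < T := by exact_mod_cast hT
  have hγL : γ * L ≤ 1 / 2 := by
    rw [le_div_iff₀ (by positivity)] at hγle
    linarith
  have hsum : ∑ j ∈ Finset.range T, ‖gdSeq g γ T xk1 j - gdSeq g γ T xk j‖ ≤
      ∑ _j ∈ Finset.range T, 2 * η := by
    refine Finset.sum_le_sum fun j hj => ?_
    have hjT : j ≤ T := (Finset.mem_range.mp hj).le
    refine (norm_gdSeq_sub_le g L γ η T hγ hγL hT hη hlip xk1 xk hx j hjT).trans ?_
    have : (j : ℝ) / T ≤ 1 := by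
      rw [div_le_one hT0]
      exact_mod_cast hjT
    gcongr
    linarith
  rw [Finset.sum_const, Finset.card_range, nsmul_eq_mul] at hsum
  rw [one_div_mul_eq_div, div_le_iff₀ hT0]
  linarith
end

section
/- Let f_i : R^d → R be L-smooth, let γ ∈ (0, 1/(2L)], let T ≥ 1, let x^k ∈ R^d, and define the local gradient descent sequence x_i^{k,0} = x^k and x_i^{k,j+1} = x_i^{k,j} − (γ/T)∇f_i(x_i^{k,j}) for j = 0,…,T−1. Then (1/T)∑_{j=0}^{T−1} ‖x^k − x_i^{k,j}‖ ≤ 2γ‖∇f_i(x^k)‖. -/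
/-!
The drift grows at most linearly: `‖x - y⁽ʲ⁾‖ ≤ j (γ/T) · 2‖g x‖` for `j ≤ T`. By the Lipschitz
bound, one step moves the iterate by at most `(γ/T) (‖g x‖ + L ‖x - y⁽ʲ⁾‖)`. As long as `j ≤ T`,
the drift is at most `2γ‖g x‖`, and `2γL ≤ 1` turns this into a step of length at most
`(γ/T) · 2‖g x‖`, which closes the induction (`norm_sub_gdSeq_le`). Hence each of the `T` terms
of the average is at most `2γ‖g x‖`.
-/

open Finset

theorem norm_sub_gdSeq_le {d : ℕ}
    (g : EuclideanSpace ℝ (Fin d) → EuclideanSpace ℝ (Fin d))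
    {L γ : ℝ} {T : ℕ} (hL : 0 < L) (hγ : 0 < γ) (hγL : 2 * γ * L ≤ 1) (hT : 1 ≤ T)
    (hlip : ∀ x y, ‖g x - g y‖ ≤ L * ‖x - y‖)
    (x : EuclideanSpace ℝ (Fin d)) (j : ℕ) (hj : j ≤ T) :
    ‖x - gdSeq g γ T x j‖ ≤ j * (γ / T * (2 * ‖g x‖)) := by
  have hT0 : (0 : ℝ) < T := by exact_mod_cast hT
  induction j with
  | zero => simp [gdSeq]
  | succ j ih =>
    have ih := ih (by omega)
    set y := gdSeq g γ T x j with hy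
    have hjT : (j : ℝ) ≤ T := by exact_mod_cast (by omega : j ≤ T)
    have hdrift : ‖x - y‖ ≤ 2 * γ * ‖g x‖ :=
      calc ‖x - y‖ ≤ j * (γ / T * (2 * ‖g x‖)) := ih
        _ ≤ T * (γ / T * (2 * ‖g x‖)) := by gcongr
        _ = 2 * γ * ‖g x‖ := by field_simp
    have hLdrift : L * ‖x - y‖ ≤ ‖g x‖ :=
      calc L * ‖x - y‖ ≤ L * (2 * γ * ‖g x‖) := by gcongr
        _ = 2 * γ * L * ‖g x‖ := by ring
        _ ≤ ‖g x‖ := mul_le_of_le_one_left (norm_nonneg _) hγL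
    have hgy : ‖g y‖ ≤ 2 * ‖g x‖ := by
      linarith [norm_le_norm_add_norm_sub (g x) (g y), hlip x y]
    calc ‖x - gdSeq g γ T x (j + 1)‖ = ‖(x - y) + (γ / (T : ℝ)) • g y‖ := by
          rw [gdSeq, ← hy]; congr 1; abel
      _ ≤ ‖x - y‖ + γ / T * ‖g y‖ := by
          refine (norm_add_le _ _).trans_eq ?_
          rw [norm_smul, Real.norm_of_nonneg (by positivity)]
      _ ≤ j * (γ / T * (2 * ‖g x‖)) + γ / T * (2 * ‖g x‖) := by gcongr
      _ = ((j + 1 : ℕ) : ℝ) * (γ / T * (2 * ‖g x‖)) := by push_cast; ring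

/-- drift of the local GD iterates from the anchor point. -/
theorem stmt9 {d : ℕ} (fi : EuclideanSpace ℝ (Fin d) → ℝ)
    (g : EuclideanSpace ℝ (Fin d) → EuclideanSpace ℝ (Fin d))
    (L γ : ℝ) (T : ℕ) (hL : 0 < L) (hγ : 0 < γ) (hγle : γ ≤ 1 / (2 * L))
    (hT : 1 ≤ T)
    (hgrad : ∀ x, HasGradientAt fi (g x) x)
    (hlip : ∀ x y, ‖g x - g y‖ ≤ L * ‖x - y‖)
    (xk : EuclideanSpace ℝ (Fin d)) :
    (1 / (T : ℝ)) * ∑ j ∈ Finset.range T, ‖xk - gdSeq g γ T xk j‖ ≤ 2 * γ * ‖g xk‖ := by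
  have hT0 : (0 : ℝ) < T := by exact_mod_cast hT
  have hγL : 2 * γ * L ≤ 1 := by
    rw [le_div_iff₀ (by positivity)] at hγle
    linarith
  have hterm : ∀ j ∈ Finset.range T, ‖xk - gdSeq g γ T xk j‖ ≤ 2 * γ * ‖g xk‖ := by
    intro j hj
    have hjT : j ≤ T := (Finset.mem_range.mp hj).le
    calc ‖xk - gdSeq g γ T xk j‖ ≤ j * (γ / T * (2 * ‖g xk‖)) :=
          norm_sub_gdSeq_le g hL hγ hγL hT hlip xk j hjT
      _ ≤ T * (γ / T * (2 * ‖g xk‖)) := by gcongr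
      _ = 2 * γ * ‖g xk‖ := by field_simp
  calc (1 / (T : ℝ)) * ∑ j ∈ Finset.range T, ‖xk - gdSeq g γ T xk j‖
      ≤ (1 / (T : ℝ)) * ∑ _j ∈ Finset.range T, 2 * γ * ‖g xk‖ := by
        gcongr with j hj; exact hterm j hj
    _ = 2 * γ * ‖g xk‖ := by
        rw [Finset.sum_const, Finset.card_range, nsmul_eq_mul]; field_simp
end

section
/- Let f_{i,0},…,f_{i,N−1} : R^d → R each be L-smooth, let γ ∈ (0, 1/(2L)], let x^k, x^{k+1} ∈ R^d with ‖x^{k+1} − x^k‖ ≤ η for some η > 0, and define for y ∈ {x^k, x^{k+1}} the cyclic incremental-gradient sequence starting from y: x_i^{·,0} = y and x_i^{·,j+1} = x_i^{·,j} − (γ/N)∇f_{i,j}(x_i^{·,j}) for j = 0,…,N−1 (writing x_i^{k,j} and x_i^{k+1,j} for the two sequences). Then (1/N)∑_{j=0}^{N−1} ‖x_i^{k+1,j} − x_i^{k,j}‖ ≤ 2η. -/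
/-! The distance between the two trajectories grows by a factor of at most `1 + γL/N ≤ 1 + 1/(2N)`
per step, since one step is the identity minus a `γL/N`-Lipschitz map. By induction the distance at
time `j ≤ N` is at most `η (1 + j/N)`: the increment of the bound is `η/N`, whereas the true
increment is at most `η (1 + j/N)/(2N) ≤ η/N`. So every term of the average is at most `2η`. -/

open Finset

/-- Cyclic incremental-gradient sequence starting at `y`:
`y⁽⁰⁾ = y`, `y⁽ʲ⁺¹⁾ = y⁽ʲ⁾ − (γ/N)·g_j(y⁽ʲ⁾)`. -/
noncomputable def igSeq {d : ℕ}
    (g : ℕ → EuclideanSpace ℝ (Fin d) → EuclideanSpace ℝ (Fin d)) (γ : ℝ) (N : ℕ)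
    (y : EuclideanSpace ℝ (Fin d)) : ℕ → EuclideanSpace ℝ (Fin d)
  | 0 => y
  | j + 1 => igSeq g γ N y j - (γ / (N : ℝ)) • g j (igSeq g γ N y j)

/-- One incremental-gradient step expands distances by a factor of at most `1 + 1/(2N)`. -/
lemma igSeq_step_le {d N : ℕ}
    (g : ℕ → EuclideanSpace ℝ (Fin d) → EuclideanSpace ℝ (Fin d))
    (L γ : ℝ) (hL : 0 < L) (hγ : 0 < γ) (hγle : γ ≤ 1 / (2 * L)) (j : ℕ)
    (hlip : ∀ x y, ‖g j x - g j y‖ ≤ L * ‖x - y‖) (x y : EuclideanSpace ℝ (Fin d)) :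
    ‖igSeq g γ N x (j + 1) - igSeq g γ N y (j + 1)‖ ≤
      (1 + 1 / (2 * (N : ℝ))) * ‖igSeq g γ N x j - igSeq g γ N y j‖ := by
  simp only [igSeq]
  set u := igSeq g γ N x j
  set v := igSeq g γ N y j
  have hγL : γ * L ≤ 1 / 2 := by
    rw [le_div_iff₀ (by positivity)] at hγle
    linarith
  calc ‖u - (γ / (N : ℝ)) • g j u - (v - (γ / (N : ℝ)) • g j v)‖
      = ‖(u - v) - (γ / (N : ℝ)) • (g j u - g j v)‖ := by
        congr 1
        module
    _ ≤ ‖u - v‖ + ‖(γ / (N : ℝ)) • (g j u - g j v)‖ := norm_sub_le _ _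
    _ = ‖u - v‖ + γ / N * ‖g j u - g j v‖ := by
        rw [norm_smul, Real.norm_of_nonneg (by positivity)]
    _ ≤ ‖u - v‖ + γ / N * (L * ‖u - v‖) := by
        gcongr
        exact hlip u v
    _ = ‖u - v‖ + γ * L * (‖u - v‖ / N) := by ring
    _ ≤ ‖u - v‖ + 1 / 2 * (‖u - v‖ / N) := by gcongr
    _ = (1 + 1 / (2 * (N : ℝ))) * ‖u - v‖ := by ring

/-- stability of the cyclic incremental-gradient trajectories. -/
theorem stmt12 {d N : ℕ} (hN : 0 < N)
    (fij : ℕ → EuclideanSpace ℝ (Fin d) → ℝ)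
    (g : ℕ → EuclideanSpace ℝ (Fin d) → EuclideanSpace ℝ (Fin d))
    (L γ η : ℝ) (hL : 0 < L) (hγ : 0 < γ) (hγle : γ ≤ 1 / (2 * L)) (hη : 0 < η)
    (hgrad : ∀ j ∈ Finset.range N, ∀ x, HasGradientAt (fij j) (g j x) x)
    (hlip : ∀ j ∈ Finset.range N, ∀ x y, ‖g j x - g j y‖ ≤ L * ‖x - y‖)
    (xk xk1 : EuclideanSpace ℝ (Fin d)) (hx : ‖xk1 - xk‖ ≤ η) :
    (1 / (N : ℝ)) * ∑ j ∈ Finset.range N, ‖igSeq g γ N xk1 j - igSeq g γ N xk j‖ ≤ 2 * η := by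
  have hN' : (0 : ℝ) < N := by exact_mod_cast hN
  have key : ∀ j ≤ N, ‖igSeq g γ N xk1 j - igSeq g γ N xk j‖ ≤ η * (1 + j / N) := by
    intro j
    induction j with
    | zero => simpa [igSeq] using hx
    | succ j ih =>
      intro hj
      have hjN : (j : ℝ) / N ≤ 1 := by
        rw [div_le_one hN']
        exact_mod_cast Nat.le_of_succ_le hj
      calc ‖igSeq g γ N xk1 (j + 1) - igSeq g γ N xk (j + 1)‖
          ≤ (1 + 1 / (2 * (N : ℝ))) * ‖igSeq g γ N xk1 j - igSeq g γ N xk j‖ :=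
            igSeq_step_le g L γ hL hγ hγle j (hlip j (Finset.mem_range.2 hj)) xk1 xk
        _ ≤ (1 + 1 / (2 * (N : ℝ))) * (η * (1 + j / N)) := by
            gcongr
            exact ih (Nat.le_of_succ_le hj)
        _ = η * (1 + j / N) + η / (2 * N) * (1 + j / N) := by ring
        _ ≤ η * (1 + j / N) + η / (2 * N) * (1 + 1) := by gcongr
        _ = η * (1 + ((j + 1 : ℕ) : ℝ) / N) := by
            push_cast
            ring
  have hterm : ∀ j ∈ Finset.range N, ‖igSeq g γ N xk1 j - igSeq g γ N xk j‖ ≤ 2 * η := by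
    intro j hj
    have hjN : j ≤ N := (Finset.mem_range.1 hj).le
    have hdiv : (j : ℝ) / N ≤ 1 := by
      rw [div_le_one hN']
      exact_mod_cast hjN
    calc ‖igSeq g γ N xk1 j - igSeq g γ N xk j‖ ≤ η * (1 + j / N) := key j hjN
      _ ≤ η * (1 + 1) := by gcongr
      _ = 2 * η := by ring
  have hsum := Finset.sum_le_card_nsmul _ _ _ hterm
  rw [Finset.card_range, nsmul_eq_mul] at hsum
  rw [one_div, inv_mul_le_iff₀ hN']
  exact hsum
end

section
/- Let f_{i,0},…,f_{i,N−1} : R^d → R each be L-smooth, let γ ∈ (0, 1/(2L)], let x^k, x^{k+1} ∈ R^d with ‖x^{k+1} − x^k‖ ≤ η for some η > 0, and define the local IG operator T_i^{IG}(y) = y − (γ/N)∑_{j=0}^{N−1} ∇f_{i,j}(y^{(j)}), where y^{(0)} = y and y^{(j+1)} = y^{(j)} − (γ/N)∇f_{i,j}(y^{(j)}). Then ‖T_i^{IG}(x^{k+1}) − T_i^{IG}(x^k)‖ ≤ 2η. -/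
/-!
The local operator is the endpoint `y⁽ᴺ⁾` of the incremental-gradient sequence
(`igSeq_eq_sub_sum`). Each inner step is `(1 + γL/N)`-Lipschitz, so the operator is Lipschitz with
constant `(1 + γL/N) ^ N ≤ exp (γL) ≤ exp (1/2) < 2` (`norm_igSeq_sub_le` and the step-size
bound `γL ≤ 1/2`).
-/

open Finset

/-- Local IG operator `T_i^{IG}(y) = y − (γ/N) ∑_{j<N} g_j(y⁽ʲ⁾)`. -/
noncomputable def igOp {d : ℕ}
    (g : ℕ → EuclideanSpace ℝ (Fin d) → EuclideanSpace ℝ (Fin d)) (γ : ℝ) (N : ℕ)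
    (y : EuclideanSpace ℝ (Fin d)) : EuclideanSpace ℝ (Fin d) :=
  y - (γ / (N : ℝ)) • ∑ j ∈ Finset.range N, g j (igSeq g γ N y j)

theorem igSeq_eq_sub_sum {d : ℕ}
    (g : ℕ → EuclideanSpace ℝ (Fin d) → EuclideanSpace ℝ (Fin d)) (γ : ℝ) (N : ℕ)
    (y : EuclideanSpace ℝ (Fin d)) (n : ℕ) :
    igSeq g γ N y n = y - (γ / (N : ℝ)) • ∑ j ∈ Finset.range n, g j (igSeq g γ N y j) := by
  induction n with
  | zero => simp [igSeq]
  | succ n ih =>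
    rw [igSeq, Finset.sum_range_succ, smul_add, ← sub_sub, ← ih]

/-- Each inner step `y ↦ y - (γ/N) g_j(y)` is Lipschitz with constant `1 + (γ/N) L`, so `n` of
them together are Lipschitz with the `n`-th power of that constant. -/
theorem norm_igSeq_sub_le {d N : ℕ}
    (g : ℕ → EuclideanSpace ℝ (Fin d) → EuclideanSpace ℝ (Fin d))
    {L γ : ℝ} (hL : 0 < L) (hγ : 0 < γ)
    (hlip : ∀ j ∈ Finset.range N, ∀ x y, ‖g j x - g j y‖ ≤ L * ‖x - y‖)
    (x y : EuclideanSpace ℝ (Fin d)) (n : ℕ) (hn : n ≤ N) :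
    ‖igSeq g γ N x n - igSeq g γ N y n‖ ≤ (1 + γ / N * L) ^ n * ‖x - y‖ := by
  induction n with
  | zero => simp [igSeq]
  | succ n ih =>
    have ih' := ih (by omega)
    have hg := hlip n (Finset.mem_range.2 hn) (igSeq g γ N x n) (igSeq g γ N y n)
    have hc : 0 ≤ γ / (N : ℝ) := by positivity
    simp only [igSeq]
    calc _ = ‖(igSeq g γ N x n - igSeq g γ N y n)
              - (γ / (N : ℝ)) • (g n (igSeq g γ N x n) - g n (igSeq g γ N y n))‖ := by
            rw [smul_sub, sub_sub_sub_comm]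
      _ ≤ ‖igSeq g γ N x n - igSeq g γ N y n‖
            + γ / N * ‖g n (igSeq g γ N x n) - g n (igSeq g γ N y n)‖ := by
            refine (norm_sub_le _ _).trans_eq ?_
            rw [norm_smul, Real.norm_of_nonneg hc]
      _ ≤ ‖igSeq g γ N x n - igSeq g γ N y n‖
            + γ / N * (L * ‖igSeq g γ N x n - igSeq g γ N y n‖) := by gcongr
      _ = (1 + γ / N * L) * ‖igSeq g γ N x n - igSeq g γ N y n‖ := by ring
      _ ≤ (1 + γ / N * L) * ((1 + γ / N * L) ^ n * ‖x - y‖) := by gcongr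
      _ = _ := by ring

/-- Lipschitz-type stability of the local IG operator. -/
theorem stmt13 {d N : ℕ} (hN : 0 < N)
    (fij : ℕ → EuclideanSpace ℝ (Fin d) → ℝ)
    (g : ℕ → EuclideanSpace ℝ (Fin d) → EuclideanSpace ℝ (Fin d))
    (L γ η : ℝ) (hL : 0 < L) (hγ : 0 < γ) (hγle : γ ≤ 1 / (2 * L)) (hη : 0 < η)
    (hgrad : ∀ j ∈ Finset.range N, ∀ x, HasGradientAt (fij j) (g j x) x)
    (hlip : ∀ j ∈ Finset.range N, ∀ x y, ‖g j x - g j y‖ ≤ L * ‖x - y‖)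
    (xk xk1 : EuclideanSpace ℝ (Fin d)) (hx : ‖xk1 - xk‖ ≤ η) :
    ‖igOp g γ N xk1 - igOp g γ N xk‖ ≤ 2 * η := by
  have hNR : (0 : ℝ) < N := by exact_mod_cast hN
  have hγL : γ * L ≤ 1 / 2 := by
    rw [le_div_iff₀ (by positivity)] at hγle
    linarith
  have hpow : (1 + γ / N * L) ^ N ≤ 2 := by
    calc (1 + γ / N * L) ^ N ≤ Real.exp (γ / N * L) ^ N := by
          gcongr
          linarith [Real.add_one_le_exp (γ / N * L)]
      _ = Real.exp (γ * L) := by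
          rw [← Real.exp_nat_mul]
          congr 1
          field_simp
      _ ≤ Real.exp (1 / 2) := Real.exp_le_exp.2 hγL
      _ ≤ 2 := by
          -- `exp (1/2) ^ 2 = e < 4`
          have h : Real.exp (1 / 2) ^ 2 = Real.exp 1 := by
            rw [← Real.exp_nat_mul]
            norm_num
          nlinarith [Real.exp_one_lt_d9, Real.exp_pos (1 / 2)]
  have hT : ∀ y, igOp g γ N y = igSeq g γ N y N := fun y =>
    (igSeq_eq_sub_sum g γ N y N).symm
  rw [hT, hT]
  calc _ ≤ (1 + γ / N * L) ^ N * ‖xk1 - xk‖ :=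
        norm_igSeq_sub_le g hL hγ hlip xk1 xk N le_rfl
    _ ≤ 2 * η := by gcongr
end

section
/- Let f(x) = (1/M)∑_{i=1}^M f_i(x), where f and each f_i are L-smooth, f is bounded below by f^inf > −∞, each f_i is bounded below by f_i^inf > −∞, and Δ^inf = f^inf − (1/M)∑_i f_i^inf > 0. Let γ ∈ (0, 1/(2L)], T > 1, and for each i let T_i(x^k) = x^k − (γ/T)∑_{j=0}^{T−1} ∇f_i(x_i^{k,j}) be the local GD operator with x_i^{k,0} = x^k and x_i^{k,j+1} = x_i^{k,j} − (γ/T)∇f_i(x_i^{k,j}). Suppose the vectors v_i^{k+1} ∈ R^d satisfy ‖v_i^{k+1} − (x^k − T_i(x^k))/γ‖ ≤ R for all i, let v^{k+1} = (1/M)∑_{i=1}^M v_i^{k+1}, let v̂^{k+1} ∈ R^d be nonzero, and let x^{k+1} = x^k − η·v̂^{k+1}/‖v̂^{k+1}‖ for some η > 0. Then f(x^{k+1}) − f^inf ≤ (1 + 4L·sqrt(2L)·γη/sqrt(Δ^inf))·(f(x^k) − f^inf) − η‖∇f(x^k)‖ + 2ηR + 4L·sqrt(2L)·γη·sqrt(Δ^inf)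 + 2η‖v̂^{k+1} − v^{k+1}‖ + Lη²/2. -/
/-!
The normalised step is compared with the gradient: for any `v ≠ 0`,
`-⟪g, v / ‖v‖⟫ ≤ -‖g‖ + 2 ‖g - v‖`, so the quadratic upper bound for an `L`-smooth function
(`smooth_descent`) gives
`f (x - η v / ‖v‖) ≤ f x - η ‖∇f x‖ + 2 η ‖∇f x - v‖ + L η² / 2`.
It remains to bound `‖∇f x - v̂‖` by `‖v̂ - v̄‖ + R` plus the average local drift
`‖∇fᵢ x - γ⁻¹ (x - Tᵢ x)‖`. As `2 L γ ≤ 1`, the local iterates stay within `2 γ ‖∇fᵢ x‖` of `x`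
(`gdSeq_dist`), so the drift is at most `2 L γ ‖∇fᵢ x‖` (`gdOp_drift`). Finally
`‖∇fᵢ x‖² ≤ 2 L Dᵢ` with `Dᵢ = fᵢ x - fᵢ^inf`, and the AM-GM inequality
`√Dᵢ ≤ (Dᵢ + Δ) / (2 √Δ)` makes the bound affine in `Dᵢ`; averaging, where
`(1/M) ∑ Dᵢ = f x - f^inf + Δ`, yields the stated constants.
-/

open Finset

/-- Local GD operator `T_i(y) = y − (γ/T) ∑_{j<T} g(y⁽ʲ⁾)`. -/
noncomputable def gdOp {d : ℕ}
    (g : EuclideanSpace ℝ (Fin d) → EuclideanSpace ℝ (Fin d)) (γ : ℝ) (T : ℕ)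
    (y : EuclideanSpace ℝ (Fin d)) : EuclideanSpace ℝ (Fin d) :=
  y - (γ / (T : ℝ)) • ∑ j ∈ Finset.range T, g (gdSeq g γ T y j)

/-- Quadratic upper bound for an `L`-smooth function. -/
lemma smooth_descent {d : ℕ} {f : EuclideanSpace ℝ (Fin d) → ℝ}
    {g : EuclideanSpace ℝ (Fin d) → EuclideanSpace ℝ (Fin d)} {L : ℝ}
    (hg : ∀ x, HasGradientAt f (g x) x) (hl : ∀ x y, ‖g x - g y‖ ≤ L * ‖x - y‖)
    (x u : EuclideanSpace ℝ (Fin d)) :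
    f (x + u) ≤ f x + inner ℝ (g x) u + L / 2 * ‖u‖ ^ 2 := by
  -- `φ t` is `f` along the segment minus the claimed bound; it decreases on `[0, 1]`.
  let φ : ℝ → ℝ := fun t => f (x + t • u) - t * inner ℝ (g x) u - L / 2 * ‖u‖ ^ 2 * t ^ 2
  have hd : ∀ t, HasDerivAt φ
      (inner ℝ (g (x + t • u)) u - inner ℝ (g x) u - L * ‖u‖ ^ 2 * t) t := by
    intro t
    have h1 : HasDerivAt (fun s : ℝ => x + s • u) u t := by
      simpa using ((hasDerivAt_id t).smul_const u).const_add x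
    have h2 : HasDerivAt (fun s : ℝ => f (x + s • u)) (inner ℝ (g (x + t • u)) u) t := by
      have h := (hg (x + t • u)).hasFDerivAt.comp_hasDerivAt t h1
      rw [InnerProductSpace.toDual_apply_apply] at h
      exact h
    have h3 := (h2.sub ((hasDerivAt_id t).mul_const (inner ℝ (g x) u))).sub
      ((hasDerivAt_pow 2 t).const_mul (L / 2 * ‖u‖ ^ 2))
    refine h3.congr_deriv ?_
    push_cast
    ring
  have hanti : AntitoneOn φ (Set.Icc 0 1) := by
    refine antitoneOn_of_deriv_nonpos (convex_Icc 0 1)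
      (fun t _ => (hd t).continuousAt.continuousWithinAt)
      (fun t _ => (hd t).differentiableAt.differentiableWithinAt) ?_
    intro t ht
    rw [interior_Icc] at ht
    rw [(hd t).deriv, ← inner_sub_left]
    have h1 := real_inner_le_norm (g (x + t • u) - g x) u
    have h2 := hl (x + t • u) x
    rw [add_sub_cancel_left, norm_smul, Real.norm_of_nonneg ht.1.le] at h2
    have h3 := mul_le_mul_of_nonneg_right h2 (norm_nonneg u)
    nlinarith
  have h := hanti (Set.left_mem_Icc.2 zero_le_one) (Set.right_mem_Icc.2 zero_le_one) zero_le_one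
  simp only [φ, one_smul, zero_smul, add_zero] at h
  linarith

lemma norm_grad_sq_le {d : ℕ} {f : EuclideanSpace ℝ (Fin d) → ℝ}
    {g : EuclideanSpace ℝ (Fin d) → EuclideanSpace ℝ (Fin d)} {L m : ℝ} (hL : 0 < L)
    (hg : ∀ x, HasGradientAt f (g x) x) (hl : ∀ x y, ‖g x - g y‖ ≤ L * ‖x - y‖)
    (hm : ∀ x, m ≤ f x) (x : EuclideanSpace ℝ (Fin d)) :
    ‖g x‖ ^ 2 ≤ 2 * L * (f x - m) := by
  -- the step `-(1 / L) ∇f x` minimises the quadratic upper bound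
  have h := smooth_descent hg hl x (-(L⁻¹ • g x))
  have h2 := hm (x + -(L⁻¹ • g x))
  rw [inner_neg_right, inner_smul_right, real_inner_self_eq_norm_sq, norm_neg, norm_smul,
    Real.norm_of_nonneg (inv_nonneg.2 hL.le)] at h
  have h3 : L⁻¹ * ‖g x‖ ^ 2 / 2 ≤ f x - m := by
    have : L / 2 * (L⁻¹ * ‖g x‖) ^ 2 = L⁻¹ * ‖g x‖ ^ 2 / 2 := by field_simp
    linarith
  calc ‖g x‖ ^ 2 = 2 * L * (L⁻¹ * ‖g x‖ ^ 2 / 2) := by field_simp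
    _ ≤ _ := by gcongr

lemma gdSeq_dist {d : ℕ} {g : EuclideanSpace ℝ (Fin d) → EuclideanSpace ℝ (Fin d)}
    {L γ : ℝ} {T : ℕ} (hL : 0 < L) (hγ : 0 < γ) (hγL : 2 * L * γ ≤ 1) (hT : 0 < T)
    (hl : ∀ x y, ‖g x - g y‖ ≤ L * ‖x - y‖) (x : EuclideanSpace ℝ (Fin d)) (j : ℕ) (hj : j ≤ T) :
    ‖gdSeq g γ T x j - x‖ ≤ 2 * γ * ‖g x‖ * (j / T) := by
  have hT' : (0 : ℝ) < T := by exact_mod_cast hT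
  induction j with
  | zero => simp [gdSeq]
  | succ j ih =>
    have ih := ih (by omega)
    set y := gdSeq g γ T x j with hy
    have hjT : (j : ℝ) / T ≤ 1 := by
      rw [div_le_one hT']
      exact_mod_cast (by omega : j ≤ T)
    have hn := norm_nonneg (g x)
    have h1 : ‖y - x‖ ≤ 2 * γ * ‖g x‖ :=
      ih.trans (mul_le_of_le_one_right (by positivity) hjT)
    have h2 : ‖g y‖ ≤ 2 * ‖g x‖ := by
      have h3 : ‖g y‖ ≤ ‖g y - g x‖ + ‖g x‖ := by
        simpa using norm_add_le (g y - g x) (g x)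
      have h4 := hl y x
      have h5 := mul_le_mul_of_nonneg_left h1 hL.le
      have h6 := mul_le_mul_of_nonneg_right hγL hn
      nlinarith
    have h7 : gdSeq g γ T x (j + 1) - x = (y - x) - (γ / (T : ℝ)) • g y := by
      simp only [gdSeq, ← hy]
      abel
    rw [h7]
    refine (norm_sub_le _ _).trans ?_
    rw [norm_smul, Real.norm_of_nonneg (by positivity)]
    have h8 := mul_le_mul_of_nonneg_left h2 (by positivity : 0 ≤ γ / (T : ℝ))
    have h9 : 2 * γ * ‖g x‖ * (((j + 1 : ℕ) : ℝ) / T)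
        = 2 * γ * ‖g x‖ * (j / T) + γ / T * (2 * ‖g x‖) := by
      push_cast
      ring
    linarith

lemma gdOp_drift {d : ℕ} {g : EuclideanSpace ℝ (Fin d) → EuclideanSpace ℝ (Fin d)}
    {L γ : ℝ} {T : ℕ} (hL : 0 < L) (hγ : 0 < γ) (hγL : 2 * L * γ ≤ 1) (hT : 0 < T)
    (hl : ∀ x y, ‖g x - g y‖ ≤ L * ‖x - y‖) (x : EuclideanSpace ℝ (Fin d)) :
    ‖γ⁻¹ • (x - gdOp g γ T x) - g x‖ ≤ 2 * L * γ * ‖g x‖ := by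
  have hT' : (0 : ℝ) < T := by exact_mod_cast hT
  have h1 : γ⁻¹ • (x - gdOp g γ T x) - g x
      = (T : ℝ)⁻¹ • ∑ j ∈ range T, (g (gdSeq g γ T x j) - g x) := by
    rw [gdOp, sub_sub_cancel, smul_smul, sum_sub_distrib, sum_const, card_range, smul_sub,
      ← Nat.cast_smul_eq_nsmul ℝ T (g x), smul_smul, inv_mul_cancel₀ hT'.ne', one_smul]
    congr 2
    field_simp
  have h2 : ∀ j ∈ range T, ‖g (gdSeq g γ T x j) - g x‖ ≤ 2 * L * γ * ‖g x‖ := by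
    intro j hj
    have hj' : j ≤ T := (mem_range.1 hj).le
    have h3 := gdSeq_dist hL hγ hγL hT hl x j hj'
    have hjT : (j : ℝ) / T ≤ 1 := by
      rw [div_le_one hT']
      exact_mod_cast hj'
    have h4 := h3.trans (mul_le_of_le_one_right (by positivity) hjT)
    have h5 := mul_le_mul_of_nonneg_left h4 hL.le
    linarith [hl (gdSeq g γ T x j) x]
  rw [h1, norm_smul, Real.norm_of_nonneg (by positivity)]
  calc (T : ℝ)⁻¹ * ‖∑ j ∈ range T, (g (gdSeq g γ T x j) - g x)‖
      ≤ (T : ℝ)⁻¹ * (T * (2 * L * γ * ‖g x‖)) := by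
        gcongr
        refine (norm_sum_le_of_le _ h2).trans ?_
        simp
    _ = 2 * L * γ * ‖g x‖ := by field_simp

/-- Normalising `v` costs at most twice its distance to `g`. -/
lemma neg_inner_normalized_le {d : ℕ} (g v : EuclideanSpace ℝ (Fin d)) (hv : v ≠ 0) :
    -(‖v‖⁻¹ * inner ℝ g v) ≤ -‖g‖ + 2 * ‖g - v‖ := by
  have hv' : 0 < ‖v‖ := norm_pos_iff.2 hv
  have h1 : inner ℝ g v = inner ℝ (g - v) v + ‖v‖ ^ 2 := by
    rw [inner_sub_left, real_inner_self_eq_norm_sq]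
    ring
  have h2 := (abs_le.1 (abs_real_inner_le_norm (g - v) v)).1
  have h3 : ‖g‖ ≤ ‖g - v‖ + ‖v‖ := by simpa using norm_add_le (g - v) v
  have h4 : ‖v‖⁻¹ * inner ℝ g v ≥ ‖v‖⁻¹ * (‖v‖ * (‖v‖ - ‖g - v‖)) := by
    gcongr
    rw [h1]
    linarith
  rw [inv_mul_cancel_left₀ hv'.ne'] at h4
  linarith

lemma gradient_avg {d M : ℕ} {f : EuclideanSpace ℝ (Fin d) → ℝ}
    {fi : Fin M → EuclideanSpace ℝ (Fin d) → ℝ} {u : EuclideanSpace ℝ (Fin d)}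
    {w : Fin M → EuclideanSpace ℝ (Fin d)} {x : EuclideanSpace ℝ (Fin d)}
    (hf : ∀ x, f x = (1 / (M : ℝ)) * ∑ i, fi i x)
    (hu : HasGradientAt f u x) (hw : ∀ i, HasGradientAt (fi i) (w i) x) :
    u = (1 / (M : ℝ)) • ∑ i, w i := by
  refine hu.unique ?_
  rw [hasGradientAt_iff_hasFDerivAt, map_smul, map_sum]
  have h := (HasFDerivAt.fun_sum (u := Finset.univ)
    fun i _ => (hw i).hasFDerivAt).const_mul (1 / (M : ℝ))
  exact h.congr_of_eventuallyEq (Filter.Eventually.of_forall hf)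

/-- one-round descent inequality for Fed-α-NormEC with multiple local GD steps. -/
theorem stmt16 {d M : ℕ} (hM : 0 < M)
    (f : EuclideanSpace ℝ (Fin d) → ℝ)
    (fi : Fin M → EuclideanSpace ℝ (Fin d) → ℝ)
    (gf : EuclideanSpace ℝ (Fin d) → EuclideanSpace ℝ (Fin d))
    (gi : Fin M → EuclideanSpace ℝ (Fin d) → EuclideanSpace ℝ (Fin d))
    (L finf Δinf γ η R : ℝ) (fiinf : Fin M → ℝ) (T : ℕ)
    (hL : 0 < L) (hγ : 0 < γ) (hγle : γ ≤ 1 / (2 * L)) (hT : 1 < T)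
    (hη : 0 < η) (hR : 0 < R)
    (hf : ∀ x, f x = (1 / (M : ℝ)) * ∑ i, fi i x)
    (hgradf : ∀ x, HasGradientAt f (gf x) x)
    (hlipf : ∀ x y, ‖gf x - gf y‖ ≤ L * ‖x - y‖)
    (hgradi : ∀ i x, HasGradientAt (fi i) (gi i x) x)
    (hlipi : ∀ i x y, ‖gi i x - gi i y‖ ≤ L * ‖x - y‖)
    (hfbdd : ∀ x, finf ≤ f x)
    (hfibdd : ∀ i x, fiinf i ≤ fi i x)
    (hΔ : Δinf = finf - (1 / (M : ℝ)) * ∑ i, fiinf i) (hΔpos : 0 < Δinf)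
    (xk xk1 vhat : EuclideanSpace ℝ (Fin d)) (vik1 : Fin M → EuclideanSpace ℝ (Fin d))
    (hvR : ∀ i, ‖vik1 i - γ⁻¹ • (xk - gdOp (gi i) γ T xk)‖ ≤ R)
    (vbar : EuclideanSpace ℝ (Fin d)) (hvbar : vbar = (1 / (M : ℝ)) • ∑ i, vik1 i)
    (hvhat : vhat ≠ 0)
    (hx : xk1 = xk - (η / ‖vhat‖) • vhat) :
    f xk1 - finf ≤
      (1 + 4 * L * Real.sqrt (2 * L) * γ * η / Real.sqrt Δinf) * (f xk - finf)
        - η * ‖gf xk‖ + 2 * η * R + 4 * L * Real.sqrt (2 * L) * γ * η * Real.sqrt Δinf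
        + 2 * η * ‖vhat - vbar‖ + L * η ^ 2 / 2 := by
  have hM' : (0 : ℝ) < M := by exact_mod_cast hM
  have hγL : 2 * L * γ ≤ 1 := by
    rw [le_div_iff₀ (by positivity)] at hγle
    linarith
  have hs : 0 < √Δinf := Real.sqrt_pos.2 hΔpos
  have hss : √Δinf ^ 2 = Δinf := Real.sq_sqrt hΔpos.le
  have hgrad : ∀ i, ‖gi i xk‖ ≤ √(2 * L) * ((fi i xk - fiinf i + Δinf) / (2 * √Δinf)) := by
    intro i
    have hD : 0 ≤ fi i xk - fiinf i := sub_nonneg.2 (hfibdd i xk)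
    have h1 := Real.le_sqrt_of_sq_le
      (norm_grad_sq_le hL (hgradi i) (hlipi i) (hfibdd i) xk)
    rw [Real.sqrt_mul (by positivity)] at h1
    refine h1.trans (mul_le_mul_of_nonneg_left ?_ (Real.sqrt_nonneg _))
    rw [le_div_iff₀ (by positivity)]
    nlinarith [sq_nonneg (√(fi i xk - fiinf i) - √Δinf), Real.sq_sqrt hD]
  -- tracking error plus local drift of a single client
  have hclient : ∀ i, ‖vik1 i - gi i xk‖ ≤
      R + 2 * L * γ * (√(2 * L) * ((fi i xk - fiinf i + Δinf) / (2 * √Δinf))) := by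
    intro i
    have h1 := norm_add_le (vik1 i - γ⁻¹ • (xk - gdOp (gi i) γ T xk))
      (γ⁻¹ • (xk - gdOp (gi i) γ T xk) - gi i xk)
    rw [sub_add_sub_cancel] at h1
    have h2 := gdOp_drift hL hγ hγL (by omega : 0 < T) (hlipi i) xk
    have h3 := mul_le_mul_of_nonneg_left (hgrad i) (by positivity : 0 ≤ 2 * L * γ)
    linarith [hvR i]
  have hδ : 0 ≤ f xk - finf := sub_nonneg.2 (hfbdd xk)
  have havg : ‖vbar - gf xk‖ ≤
      R + 2 * L * γ * √(2 * L) * ((f xk - finf) / √Δinf + √Δinf) := by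
    have h1 : vbar - gf xk = (1 / (M : ℝ)) • ∑ i, (vik1 i - gi i xk) := by
      rw [hvbar, gradient_avg hf (hgradf xk) (fun i => hgradi i xk), sum_sub_distrib, smul_sub]
    have h2 := norm_sum_le_of_le univ (fun i _ => hclient i)
    rw [h1, norm_smul, Real.norm_of_nonneg (by positivity)]
    refine (mul_le_mul_of_nonneg_left h2 (by positivity)).trans ?_
    rw [sum_add_distrib, ← mul_sum, ← mul_sum, ← sum_div, sum_add_distrib, sum_sub_distrib]
    simp only [sum_const, card_univ, Fintype.card_fin, nsmul_eq_mul]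
    have h3 : (1 / (M : ℝ)) * (M * R + 2 * L * γ * (√(2 * L) *
          ((∑ i, fi i xk - ∑ i, fiinf i + M * Δinf) / (2 * √Δinf))))
        = R + 2 * L * γ * √(2 * L) * ((1 / (M : ℝ) * ∑ i, fi i xk
          - 1 / (M : ℝ) * ∑ i, fiinf i + Δinf) / (2 * √Δinf)) := by
      field_simp
    rw [h3, ← hf]
    gcongr
    have h4 : (f xk - finf) / √Δinf + √Δinf = (f xk - finf + Δinf) / √Δinf := by
      field_simp
      rw [hss]
    rw [h4, div_le_div_iff₀ (by positivity) hs]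
    nlinarith
  have hdesc := smooth_descent hgradf hlipf xk (-((η / ‖vhat‖) • vhat))
  have hv' : 0 < ‖vhat‖ := norm_pos_iff.2 hvhat
  have hnorm : ‖(η / ‖vhat‖) • vhat‖ = η := by
    rw [norm_smul, Real.norm_of_nonneg (by positivity)]
    field_simp
  rw [← sub_eq_add_neg, ← hx, norm_neg, hnorm, inner_neg_right, inner_smul_right] at hdesc
  have h5 := mul_le_mul_of_nonneg_left (neg_inner_normalized_le (gf xk) vhat hvhat) hη.le
  have h6 : ‖gf xk - vhat‖ ≤ ‖vhat - vbar‖ + ‖vbar - gf xk‖ := by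
    rw [norm_sub_rev]
    simpa using norm_add_le (vhat - vbar) (vbar - gf xk)
  have h7 := mul_le_mul_of_nonneg_left (h6.trans (add_le_add_right havg _))
    (by positivity : 0 ≤ 2 * η)
  have h8 : η / ‖vhat‖ * inner ℝ (gf xk) vhat = η * (‖vhat‖⁻¹ * inner ℝ (gf xk) vhat) := by
    ring
  rw [h8] at hdesc
  have h9 : 4 * L * √(2 * L) * γ * η / √Δinf * (f xk - finf)
      = 4 * L * √(2 * L) * γ * η * ((f xk - finf) / √Δinf) := by
    ring
  rw [add_mul, one_mul, h9]
  linarith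
end
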